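/- Let S = {(1,1), (−1,1), (1,−1)} ⊂ ℤ². Let dₙ be the number of quarter-plane walks of length n with steps S that end on the x-axis. Let t be real with 0 < t ≤ 1/3, define Y : ℝ → ℝ by Y(y) = y(1 − √(1 − 4t²(1+y²)))/(2t(1+y²)) and yₙ = Y⁽ⁿ⁾(1). Then the series ∑_{n≥0} dₙ tⁿ and ∑_{n≥0} (−1)ⁿ yₙ y_{n+1} both converge, and ∑_{n≥0} dₙ tⁿ = (1/t)·∑_{n≥0} (−1)ⁿ yₙ y_{n+1}. -/

import Mathlib

/-- The step set S = {(1,1), (−1,1), (1,−1)}. -/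
def stepsS : Set (ℤ × ℤ) := {(1, 1), (-1, 1), (1, -1)}

/-- A quarter-plane walk of length `n` with steps from `S`. -/
def IsQuarterWalk (S : Set (ℤ × ℤ)) (n : ℕ) (p : Fin (n + 1) → ℤ × ℤ) : Prop :=
  p 0 = (0, 0) ∧
  (∀ k : Fin n, p k.succ - p k.castSucc ∈ S) ∧
  (∀ k : Fin (n + 1), 0 ≤ (p k).1 ∧ 0 ≤ (p k).2)

/-- The number of quarter-plane walks of length `n` with steps `S` ending on the x-axis. -/
noncomputable def numWalksXAxis (n : ℕ) : ℕ :=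
  Nat.card {p : Fin (n + 1) → ℤ × ℤ //
    IsQuarterWalk stepsS n p ∧ (p (Fin.last n)).2 = 0}

/-! The counts of walks by endpoint assemble into `Q(t; x, y) = ∑ qₙ(x, y) tⁿ`. Appending a last
step gives the functional equation
`xy Q(x, y) = xy + t (x²y² + x² + y²) Q(x, y) - t x² Q(x, 0) - t y² Q(0, y)`,
and `Q(0, y) = Q(y, 0)` because the step set is invariant under swapping the coordinates. The
substitution `y = Y(x)` cancels the kernel and leaves `g(x) + g(Y(x)) = x Y(x)` for
`g(x) = t x² Q(x, 0)`. Iterating along `x, Y(x), Y(Y(x)), …`, which decays geometrically, the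
alternating sum of the right-hand sides telescopes to `g(x)`. -/

open Finset

theorem hasSum_alternating_add_succ {R : Type*} [Ring R] [UniformSpace R] [IsUniformAddGroup R]
    [CompleteSpace R] {g : ℕ → R} (hg : Summable g) :
    HasSum (fun n => (-1) ^ n * (g n + g (n + 1))) (g 0) := by
  have hsum := hg.alternating.hasSum
  have shifted := (hasSum_nat_add_iff' 1).mpr hsum
  have telescoped := hsum.sub shifted
  rw [sub_sub_cancel, sum_range_one, pow_zero, one_mul] at telescoped
  exact telescoped.congr_fun fun n => by rw [pow_succ]; noncomm_ring

/-- The quarter-plane walks of length `n` with steps in `S`, bundled as a type so that generating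
polynomials are sums over it. -/
abbrev QuarterWalk (S : Set (ℤ × ℤ)) (n : ℕ) : Type :=
  {p : Fin (n + 1) → ℤ × ℤ // IsQuarterWalk S n p}

theorem isQuarterWalk_snoc {S : Set (ℤ × ℤ)} {n : ℕ} {p : Fin (n + 1) → ℤ × ℤ} {a : ℤ × ℤ} :
    IsQuarterWalk S (n + 1) (Fin.snoc p a) ↔
      IsQuarterWalk S n p ∧ a - p (Fin.last n) ∈ S ∧ 0 ≤ a := by
  have start : (Fin.snoc p a : Fin (n + 2) → ℤ × ℤ) 0 = p 0 :=
    Fin.snoc_castSucc (α := fun _ => ℤ × ℤ) a p 0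
  simp only [IsQuarterWalk, start, Fin.forall_fin_succ' (n := n), Fin.forall_fin_succ' (n := n + 1),
    Fin.succ_castSucc, Fin.succ_last, Fin.snoc_castSucc, Fin.snoc_last, Prod.le_def, Prod.fst_zero,
    Prod.snd_zero]
  tauto

theorem IsQuarterWalk.swap {S : Set (ℤ × ℤ)} {n : ℕ} {p : Fin (n + 1) → ℤ × ℤ}
    (hS : ∀ s ∈ S, s.swap ∈ S) (hp : IsQuarterWalk S n p) : IsQuarterWalk S n (Prod.swap ∘ p) := by
  obtain ⟨hstart, hstep, hnonneg⟩ := hp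
  exact ⟨congrArg Prod.swap hstart, fun k => hS _ (hstep k), fun k => (hnonneg k).symm⟩

namespace QuarterWalk

variable {S : Set (ℤ × ℤ)} {n : ℕ}

/-- The last point of a walk. -/
def endpoint (p : QuarterWalk S n) : ℤ × ℤ := p.1 (Fin.last n)

theorem endpoint_nonneg (p : QuarterWalk S n) : 0 ≤ p.endpoint := p.2.2.2 (Fin.last n)

instance : Unique (QuarterWalk S 0) where
  default := ⟨fun _ => (0, 0), rfl, fun k => k.elim0, fun _ => ⟨le_rfl, le_rfl⟩⟩
  uniq p := Subtype.ext <| funext <| (Fin.forall_fin_one (p := fun k => p.1 k = (0, 0))).mpr p.2.1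

theorem endpoint_default : (default : QuarterWalk S 0).endpoint = 0 := rfl

/-- A walk of length `n + 1` is a walk of length `n` together with a last step that does not leave
the quarter plane. -/
def succEquiv (S : Set (ℤ × ℤ)) (n : ℕ) :
    QuarterWalk S (n + 1) ≃ {q : QuarterWalk S n × S // 0 ≤ q.1.endpoint + q.2} where
  toFun p :=
    have hp := isQuarterWalk_snoc.mp ((Fin.snoc_init_self p.1).symm ▸ p.2)
    ⟨(⟨Fin.init p.1, hp.1⟩, ⟨_, hp.2.1⟩), by simpa [endpoint] using hp.2.2⟩
  invFun q := ⟨Fin.snoc q.1.1.1 (q.1.1.endpoint + q.1.2),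
    isQuarterWalk_snoc.mpr ⟨q.1.1.2, by simp [endpoint], q.2⟩⟩
  left_inv p := by simp [endpoint]
  right_inv q := Subtype.ext <| by simp [endpoint]

theorem endpoint_succEquiv_symm
    (q : {q : QuarterWalk S n × S // 0 ≤ q.1.endpoint + q.2}) :
    ((succEquiv S n).symm q).endpoint = q.1.1.endpoint + q.1.2 :=
  Fin.snoc_last (α := fun _ => ℤ × ℤ) _ _

instance [Finite S] : Finite (QuarterWalk S n) := by
  induction n with
  | zero => infer_instance
  | succ n ih => exact Finite.of_equiv _ (succEquiv S n).symm

noncomputable instance [Finite S] : Fintype (QuarterWalk S n) := Fintype.ofFinite _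

theorem sum_endpoint_succ [Fintype S] {M : Type*} [AddCommMonoid M] (f : ℤ × ℤ → M) :
    ∑ p : QuarterWalk S (n + 1), f p.endpoint =
      ∑ p : QuarterWalk S n, ∑ s : S, if 0 ≤ p.endpoint + s then f (p.endpoint + s) else 0 := by
  rw [← Fintype.sum_prod_type', ← Finset.sum_filter,
    Finset.sum_subtype (F := Subtype.fintype _) _
      (p := fun q : QuarterWalk S n × S => 0 ≤ q.1.endpoint + q.2) (by simp),
    ← (succEquiv S n).symm.sum_comp]
  simp only [endpoint_succEquiv_symm]

theorem sum_endpoint_swap [Finite S] {M : Type*} [AddCommMonoid M] (hS : ∀ s ∈ S, s.swap ∈ S)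
    (f : ℤ × ℤ → M) :
    ∑ p : QuarterWalk S n, f p.endpoint.swap = ∑ p : QuarterWalk S n, f p.endpoint := by
  have involutive : Function.Involutive
      (fun p : QuarterWalk S n => (⟨Prod.swap ∘ p.1, p.2.swap hS⟩ : QuarterWalk S n)) :=
    fun p => rfl
  exact Equiv.sum_comp involutive.toPerm fun p => f p.endpoint

end QuarterWalk

section EndpointPoly

variable {S : Set (ℤ × ℤ)} {n : ℕ} {K : Type*} [Field K] {x y : K}

/-- The step polynomial `∑ xᵃ yᵇ` over the steps `(a, b)` in `S`. -/
noncomputable def stepPoly (S : Set (ℤ × ℤ)) [Fintype S] (x y : K) : K :=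
  ∑ s : S, x ^ s.1.1 * y ^ s.1.2

/-- The polynomial `qₙ(x, y) = ∑ xⁱ yʲ` over the walks of length `n`, with `(i, j)` the endpoint.
As `0 ^ 0 = 1`, setting `y = 0` selects the walks that end on the x-axis. -/
noncomputable def endpointPoly (S : Set (ℤ × ℤ)) [Finite S] (n : ℕ) (x y : K) : K :=
  ∑ p : QuarterWalk S n, x ^ p.endpoint.1 * y ^ p.endpoint.2

theorem endpointPoly_zero [Finite S] : endpointPoly S 0 x y = 1 := by
  simp [endpointPoly, QuarterWalk.endpoint_default]

theorem endpointPoly_nonneg [Finite S] [LinearOrder K] [IsStrictOrderedRing K] (hx : 0 ≤ x)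
    (hy : 0 ≤ y) : 0 ≤ endpointPoly S n x y :=
  sum_nonneg fun _ _ => mul_nonneg (zpow_nonneg hx _) (zpow_nonneg hy _)

theorem endpointPoly_mono [Finite S] [LinearOrder K] [IsStrictOrderedRing K] {x' y' : K}
    (hx : 0 ≤ x) (hxx' : x ≤ x') (hy : 0 ≤ y) (hyy' : y ≤ y') :
    endpointPoly S n x y ≤ endpointPoly S n x' y' :=
  sum_le_sum fun p _ => mul_le_mul (zpow_le_zpow_left₀ p.endpoint_nonneg.1 hx hxx')
    (zpow_le_zpow_left₀ p.endpoint_nonneg.2 hy hyy') (zpow_nonneg hy _)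
    (zpow_nonneg (hx.trans hxx') _)

theorem endpointPoly_swap [Finite S] (hS : ∀ s ∈ S, s.swap ∈ S) :
    endpointPoly S n y x = endpointPoly S n x y := by
  rw [endpointPoly, endpointPoly,
    ← QuarterWalk.sum_endpoint_swap hS fun a : ℤ × ℤ => x ^ a.1 * y ^ a.2]
  simp only [Prod.fst_swap, Prod.snd_swap, mul_comm]

theorem endpointPoly_succ_le [Fintype S] [LinearOrder K] [IsStrictOrderedRing K] (hx : 0 < x)
    (hy : 0 < y) :
    endpointPoly S (n + 1) x y ≤ endpointPoly S n x y * stepPoly S x y := by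
  rw [endpointPoly, QuarterWalk.sum_endpoint_succ fun a : ℤ × ℤ => x ^ a.1 * y ^ a.2, endpointPoly,
    stepPoly, sum_mul_sum]
  gcongr with p _ s _
  have weight_add : x ^ (p.endpoint + s).1 * y ^ (p.endpoint + s).2 =
      x ^ p.endpoint.1 * y ^ p.endpoint.2 * (x ^ s.1.1 * y ^ s.1.2) := by
    rw [Prod.fst_add, Prod.snd_add, zpow_add₀ hx.ne', zpow_add₀ hy.ne']
    ring
  rw [weight_add]
  split_ifs
  · exact le_rfl
  · positivity

theorem endpointPoly_le_stepPoly_pow [Fintype S] [LinearOrder K] [IsStrictOrderedRing K]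
    (hx : 0 < x) (hy : 0 < y) : endpointPoly S n x y ≤ stepPoly S x y ^ n := by
  have stepPoly_nonneg : 0 ≤ stepPoly S x y := sum_nonneg fun _ _ => by positivity
  induction n with
  | zero => rw [endpointPoly_zero, pow_zero]
  | succ n ih =>
    calc endpointPoly S (n + 1) x y ≤ endpointPoly S n x y * stepPoly S x y :=
          endpointPoly_succ_le hx hy
      _ ≤ stepPoly S x y ^ n * stepPoly S x y := by gcongr
      _ = stepPoly S x y ^ (n + 1) := (pow_succ _ _).symm

end EndpointPoly

section StepsS

variable {n : ℕ} {t x y : ℝ}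

instance : Fintype stepsS :=
  inferInstanceAs (Fintype ({(1, 1), (-1, 1), (1, -1)} : Set (ℤ × ℤ)))

theorem sum_stepsS {M : Type*} [AddCommMonoid M] (f : ℤ × ℤ → M) :
    ∑ s : stepsS, f s = f (1, 1) + f (-1, 1) + f (1, -1) := by
  rw [← Finset.sum_subtype {(1, 1), (-1, 1), (1, -1)} (by simp [stepsS]) f]
  simp [add_assoc]

theorem swap_mem_stepsS {s : ℤ × ℤ} (hs : s ∈ stepsS) : s.swap ∈ stepsS := by
  rcases hs with rfl | rfl | rfl <;> simp [stepsS]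

theorem numWalksXAxis_eq_endpointPoly {K : Type*} [Field K] (n : ℕ) :
    (numWalksXAxis n : K) = endpointPoly stepsS n 1 0 := by
  rw [numWalksXAxis,
    ← Nat.card_congr (Equiv.subtypeSubtypeEquivSubtypeInter (IsQuarterWalk stepsS n)
      fun p => (p (Fin.last n)).2 = 0),
    Nat.card_eq_fintype_card, Fintype.card_subtype, ← sum_boole]
  simp only [endpointPoly, one_zpow, one_mul, zero_zpow_eq, QuarterWalk.endpoint]

theorem sum_stepsS_weight {K : Type*} [Field K] {x y : K} (hx : x ≠ 0) (hy : y ≠ 0)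
    {a : ℤ × ℤ} (ha : 0 ≤ a) :
    x * y * ∑ s : stepsS,
        (if 0 ≤ a + s then x ^ (a + s.1).1 * y ^ (a + s.1).2 else 0) =
      (x ^ 2 * y ^ 2 + x ^ 2 + y ^ 2) * (x ^ a.1 * y ^ a.2) -
        x ^ 2 * (x ^ a.1 * 0 ^ a.2) - y ^ 2 * (0 ^ a.1 * y ^ a.2) := by
  obtain ⟨i, j⟩ := a
  obtain ⟨hi, hj⟩ : 0 ≤ i ∧ 0 ≤ j := ha
  have up_right : (0 : ℤ × ℤ) ≤ (i + 1, j + 1) := ⟨by positivity, by positivity⟩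
  have up_left : (0 : ℤ × ℤ) ≤ (i + -1, j + 1) ↔ i ≠ 0 := by
    simp only [Prod.le_def, Prod.fst_zero, Prod.snd_zero]
    omega
  have down_right : (0 : ℤ × ℤ) ≤ (i + 1, j + -1) ↔ j ≠ 0 := by
    simp only [Prod.le_def, Prod.fst_zero, Prod.snd_zero]
    omega
  rw [sum_stepsS fun s => if 0 ≤ (i, j) + s then x ^ ((i, j) + s).1 * y ^ ((i, j) + s).2 else 0]
  simp only [Prod.mk_add_mk, up_right, up_left, down_right, if_true, zpow_add₀ hx, zpow_add₀ hy,
    zpow_one, zpow_neg, zero_zpow_eq]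
  by_cases hi0 : i = 0 <;> by_cases hj0 : j = 0 <;>
    simp only [hi0, hj0, ne_eq, not_true_eq_false, not_false_eq_true, if_true, if_false,
      zpow_zero] <;>
    field_simp <;> ring

theorem endpointPoly_stepsS_succ {K : Type*} [Field K] {x y : K} (n : ℕ) (hx : x ≠ 0)
    (hy : y ≠ 0) :
    x * y * endpointPoly stepsS (n + 1) x y =
      (x ^ 2 * y ^ 2 + x ^ 2 + y ^ 2) * endpointPoly stepsS n x y -
        x ^ 2 * endpointPoly stepsS n x 0 - y ^ 2 * endpointPoly stepsS n 0 y := by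
  simp only [endpointPoly]
  rw [QuarterWalk.sum_endpoint_succ fun a : ℤ × ℤ => x ^ a.1 * y ^ a.2]
  simp only [mul_sum (s := (univ : Finset (QuarterWalk stepsS n))),
    ← sum_sub_distrib]
  exact sum_congr rfl fun p _ => sum_stepsS_weight hx hy p.endpoint_nonneg

theorem stepPoly_stepsS_one_inv_sqrt_two : stepPoly stepsS 1 (√2)⁻¹ = √8 := by
  have sqrt_eight : √8 = 2 * √2 := by
    rw [show (8 : ℝ) = 2 ^ 2 * 2 by norm_num, Real.sqrt_mul (by positivity),
      Real.sqrt_sq (by positivity)]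
  rw [stepPoly, sum_stepsS fun s : ℤ × ℤ => (1 : ℝ) ^ s.1 * (√2)⁻¹ ^ s.2, sqrt_eight]
  simp only [one_mul, zpow_one, zpow_neg, inv_inv]
  field_simp
  norm_num

/- At `x = 1` the step polynomial `2 y + 1 / y` is smallest at `y = 1 / √2`. -/
theorem endpointPoly_stepsS_le (hx : 0 ≤ x) (hx1 : x ≤ 1) (hy : 0 ≤ y) (hy1 : y ≤ (√2)⁻¹) :
    endpointPoly stepsS n x y ≤ √8 ^ n :=
  calc endpointPoly stepsS n x y ≤ endpointPoly stepsS n 1 (√2)⁻¹ := endpointPoly_mono hx hx1 hy hy1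
    _ ≤ stepPoly stepsS 1 (√2)⁻¹ ^ n := endpointPoly_le_stepPoly_pow one_pos (by positivity)
    _ = √8 ^ n := by rw [stepPoly_stepsS_one_inv_sqrt_two]

theorem summable_endpointPoly_stepsS_mul_pow (ht : 0 ≤ t) (ht8 : 8 * t ^ 2 < 1) (hx : 0 ≤ x)
    (hx1 : x ≤ 1) (hy : 0 ≤ y) (hy1 : y ≤ (√2)⁻¹) :
    Summable fun n => endpointPoly stepsS n x y * t ^ n := by
  have ratio_lt_one : √8 * t < 1 := by
    refine lt_of_pow_lt_pow_left₀ 2 zero_le_one ?_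
    rwa [mul_pow, Real.sq_sqrt (by norm_num), one_pow]
  refine .of_nonneg_of_le (fun n => mul_nonneg (endpointPoly_nonneg hx hy) (by positivity))
    (fun n => ?_) (summable_geometric_of_lt_one (by positivity) ratio_lt_one)
  rw [mul_pow]
  gcongr
  exact endpointPoly_stepsS_le hx hx1 hy hy1

/-- The generating function `Q(t; x, y)` of quarter-plane walks with steps in `stepsS`, by length
and endpoint. -/
noncomputable def walkGF (t x y : ℝ) : ℝ := ∑' n, endpointPoly stepsS n x y * t ^ n

theorem walkGF_nonneg (ht : 0 ≤ t) (hx : 0 ≤ x) (hy : 0 ≤ y) : 0 ≤ walkGF t x y :=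
  tsum_nonneg fun _ => mul_nonneg (endpointPoly_nonneg hx hy) (by positivity)

theorem walkGF_swap : walkGF t y x = walkGF t x y := by
  simp only [walkGF, endpointPoly_swap fun _ => swap_mem_stepsS]

theorem walkGF_functional_equation (ht : 0 ≤ t) (ht8 : 8 * t ^ 2 < 1) (hx : 0 < x) (hx1 : x ≤ 1)
    (hy : 0 < y) (hy1 : y ≤ (√2)⁻¹) :
    x * y * walkGF t x y = x * y + t * ((x ^ 2 * y ^ 2 + x ^ 2 + y ^ 2) * walkGF t x y -
      x ^ 2 * walkGF t x 0 - y ^ 2 * walkGF t 0 y) := by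
  have hasSum {u v : ℝ} (hu : 0 ≤ u) (hu1 : u ≤ 1) (hv : 0 ≤ v) (hv1 : v ≤ (√2)⁻¹) :
      HasSum (fun n => endpointPoly stepsS n u v * t ^ n) (walkGF t u v) :=
    (summable_endpointPoly_stepsS_mul_pow ht ht8 hu hu1 hv hv1).hasSum
  have hxy := hasSum hx.le hx1 hy.le hy1
  have hx0 := hasSum hx.le hx1 le_rfl (by positivity)
  have h0y := hasSum le_rfl zero_le_one hy.le hy1
  have shifted : HasSum (fun n => x * y * (endpointPoly stepsS (n + 1) x y * t ^ (n + 1)))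
      (x * y * (walkGF t x y - 1)) := by
    simpa [endpointPoly_zero] using ((hasSum_nat_add_iff' 1).mpr hxy).mul_left (x * y)
  have recurrence := (((hxy.mul_left (x ^ 2 * y ^ 2 + x ^ 2 + y ^ 2)).sub
    (hx0.mul_left (x ^ 2))).sub (h0y.mul_left (y ^ 2))).mul_left t
  have termwise (n : ℕ) := endpointPoly_stepsS_succ n hx.ne' hy.ne'
  have sums_eq := shifted.unique <| recurrence.congr_fun fun n => by
    linear_combination t ^ (n + 1) * termwise n
  linear_combination sums_eq

theorem walkGF_of_kernel_eq_zero (ht : 0 ≤ t) (ht8 : 8 * t ^ 2 < 1) (hx : 0 < x) (hx1 : x ≤ 1)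
    (hy : 0 < y) (hy1 : y ≤ (√2)⁻¹) (hker : x * y - t * (x ^ 2 * y ^ 2 + x ^ 2 + y ^ 2) = 0) :
    t * x ^ 2 * walkGF t x 0 + t * y ^ 2 * walkGF t y 0 = x * y := by
  have equation := walkGF_functional_equation ht ht8 hx hx1 hy hy1
  rw [walkGF_swap (x := y) (y := 0)] at equation
  linear_combination equation - walkGF t x y * hker

end StepsS

section KernelRoot

variable {t x : ℝ}

/-- The small root `Y(x)` in `y` of the kernel equation `xy - t (x²y² + x² + y²) = 0`. -/
noncomputable def kernelRoot (t x : ℝ) : ℝ :=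
  x * (1 - √(1 - 4 * t ^ 2 * (1 + x ^ 2))) / (2 * t * (1 + x ^ 2))

theorem kernel_kernelRoot (ht : t ≠ 0) (hdisc : 4 * t ^ 2 * (1 + x ^ 2) ≤ 1) :
    x * kernelRoot t x - t * (x ^ 2 * kernelRoot t x ^ 2 + x ^ 2 + kernelRoot t x ^ 2) = 0 := by
  have hlead : t * (1 + x ^ 2) ≠ 0 := by positivity
  have hsq := Real.sq_sqrt (sub_nonneg.mpr hdisc)
  have discrim_eq : discrim (t * (1 + x ^ 2)) (-x) (t * x ^ 2) =
      (x * √(1 - 4 * t ^ 2 * (1 + x ^ 2))) * (x * √(1 - 4 * t ^ 2 * (1 + x ^ 2))) := by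
    rw [discrim]
    linear_combination -x ^ 2 * hsq
  have quadratic := (quadratic_eq_zero_iff hlead discrim_eq (kernelRoot t x)).mpr <| .inr <| by
    rw [kernelRoot]
    ring
  linear_combination -quadratic

theorem kernelRoot_eq_div_one_add_sqrt (ht : t ≠ 0) (hdisc : 4 * t ^ 2 * (1 + x ^ 2) ≤ 1) :
    kernelRoot t x = 2 * t * x / (1 + √(1 - 4 * t ^ 2 * (1 + x ^ 2))) := by
  have hsq := Real.sq_sqrt (sub_nonneg.mpr hdisc)
  rw [kernelRoot, div_eq_div_iff (by positivity) (by positivity)]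
  linear_combination -x * hsq

theorem kernelRoot_pos (ht : 0 < t) (hdisc : 4 * t ^ 2 * (1 + x ^ 2) ≤ 1) (hx : 0 < x) :
    0 < kernelRoot t x := by
  rw [kernelRoot_eq_div_one_add_sqrt ht.ne' hdisc]
  positivity

theorem kernelRoot_le (ht : 0 < t) (hdisc : 4 * t ^ 2 * (1 + x ^ 2) ≤ 1) (hx : 0 ≤ x) :
    kernelRoot t x ≤ 2 * t * x := by
  rw [kernelRoot_eq_div_one_add_sqrt ht.ne' hdisc]
  exact div_le_self (by positivity) (le_add_of_nonneg_right (Real.sqrt_nonneg _))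

end KernelRoot

section Iteration

variable {t x : ℝ}

theorem four_mul_sq_mul_one_add_sq_le_one (ht8 : 8 * t ^ 2 < 1) (hx : 0 ≤ x) (hx1 : x ≤ 1) :
    4 * t ^ 2 * (1 + x ^ 2) ≤ 1 :=
  calc 4 * t ^ 2 * (1 + x ^ 2) ≤ 4 * t ^ 2 * (1 + 1 ^ 2) := by gcongr
    _ ≤ 1 := by linarith

theorem two_mul_lt_one_of_eight_mul_sq_lt_one (ht8 : 8 * t ^ 2 < 1) : 2 * t < 1 := by nlinarith

theorem two_mul_le_inv_sqrt_two_of_eight_mul_sq_lt_one (ht8 : 8 * t ^ 2 < 1) : 2 * t ≤ (√2)⁻¹ := by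
  rw [← Real.sqrt_inv]
  exact Real.le_sqrt_of_sq_le (by linarith)

theorem walkGF_kernelRoot (ht : 0 < t) (ht8 : 8 * t ^ 2 < 1) (hx : 0 < x) (hx1 : x ≤ 1) :
    t * x ^ 2 * walkGF t x 0 + t * kernelRoot t x ^ 2 * walkGF t (kernelRoot t x) 0 =
      x * kernelRoot t x := by
  have hdisc := four_mul_sq_mul_one_add_sq_le_one ht8 hx.le hx1
  refine walkGF_of_kernel_eq_zero ht.le ht8 hx hx1 (kernelRoot_pos ht hdisc hx) ?_
    (kernel_kernelRoot ht.ne' hdisc)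
  calc kernelRoot t x ≤ 2 * t * x := kernelRoot_le ht hdisc hx.le
    _ ≤ 2 * t := mul_le_of_le_one_right (by positivity) hx1
    _ ≤ (√2)⁻¹ := two_mul_le_inv_sqrt_two_of_eight_mul_sq_lt_one ht8

theorem iterate_kernelRoot_bounds (ht : 0 < t) (ht8 : 8 * t ^ 2 < 1) (hx : 0 < x) (hx1 : x ≤ 1)
    (n : ℕ) : 0 < (kernelRoot t)^[n] x ∧ (kernelRoot t)^[n] x ≤ (2 * t) ^ n ∧
      (kernelRoot t)^[n] x ≤ 1 := by
  induction n with
  | zero => simpa using ⟨hx, hx1⟩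
  | succ n ih =>
    obtain ⟨hpos, hle_pow, hle_one⟩ := ih
    have hdisc := four_mul_sq_mul_one_add_sq_le_one ht8 hpos.le hle_one
    have hle := kernelRoot_le ht hdisc hpos.le
    rw [Function.iterate_succ_apply', pow_succ']
    refine ⟨kernelRoot_pos ht hdisc hpos, hle.trans (by gcongr), hle.trans ?_⟩
    exact mul_le_one₀ (two_mul_lt_one_of_eight_mul_sq_lt_one ht8).le hpos.le hle_one

theorem hasSum_alternating_iterate_kernelRoot (ht : 0 < t) (ht8 : 8 * t ^ 2 < 1) (hx : 0 < x)
    (hx1 : x ≤ 1) :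
    HasSum (fun n => (-1) ^ n * (kernelRoot t)^[n] x * (kernelRoot t)^[n + 1] x)
      (t * x ^ 2 * walkGF t x 0) := by
  have bounds := iterate_kernelRoot_bounds ht ht8 hx hx1
  set g : ℕ → ℝ := fun n => t * (kernelRoot t)^[n] x ^ 2 * walkGF t ((kernelRoot t)^[n] x) 0
  have g_nonneg (n : ℕ) : 0 ≤ g n :=
    mul_nonneg (by positivity) (walkGF_nonneg ht.le (bounds n).1.le le_rfl)
  have g_add_succ (n : ℕ) :
      g n + g (n + 1) = (kernelRoot t)^[n] x * (kernelRoot t)^[n + 1] x := by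
    simpa only [g, Function.iterate_succ_apply'] using
      walkGF_kernelRoot ht ht8 (bounds n).1 (bounds n).2.2
  have g_le (n : ℕ) : g n ≤ (2 * t) ^ n :=
    calc g n ≤ (kernelRoot t)^[n] x * (kernelRoot t)^[n + 1] x := by
          linarith [g_add_succ n, g_nonneg (n + 1)]
      _ ≤ (kernelRoot t)^[n] x := mul_le_of_le_one_right (bounds n).1.le (bounds (n + 1)).2.2
      _ ≤ (2 * t) ^ n := (bounds n).2.1
  have g_summable : Summable g := .of_nonneg_of_le g_nonneg g_le <|
    summable_geometric_of_lt_one (by positivity) (two_mul_lt_one_of_eight_mul_sq_lt_one ht8)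
  exact (hasSum_alternating_add_succ g_summable).congr_fun fun n => by rw [g_add_succ, mul_assoc]

end Iteration

theorem stmt_5_general (t : ℝ) (ht : 0 < t) (ht8 : 8 * t ^ 2 < 1) (Y : ℝ → ℝ)
    (hY : ∀ y, Y y = y * (1 - Real.sqrt (1 - 4 * t ^ 2 * (1 + y ^ 2)))
      / (2 * t * (1 + y ^ 2))) :
    Summable (fun n : ℕ => (numWalksXAxis n : ℝ) * t ^ n) ∧
    Summable (fun n : ℕ => (-1 : ℝ) ^ n * Y^[n] 1 * Y^[n + 1] 1) ∧
    (∑' n : ℕ, (numWalksXAxis n : ℝ) * t ^ n)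
      = (1 / t) * ∑' n : ℕ, (-1 : ℝ) ^ n * Y^[n] 1 * Y^[n + 1] 1 := by
  obtain rfl : Y = kernelRoot t := funext hY
  have hsum := hasSum_alternating_iterate_kernelRoot ht ht8 one_pos le_rfl
  simp only [numWalksXAxis_eq_endpointPoly]
  refine ⟨summable_endpointPoly_stepsS_mul_pow ht.le ht8 zero_le_one le_rfl le_rfl (by positivity),
    hsum.summable, ?_⟩
  rw [hsum.tsum_eq, ← walkGF]
  field_simp

theorem stmt_5 (t : ℝ) (ht : 0 < t) (ht3 : t ≤ 1 / 3) (Y : ℝ → ℝ)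
    (hY : ∀ y, Y y = y * (1 - Real.sqrt (1 - 4 * t ^ 2 * (1 + y ^ 2)))
      / (2 * t * (1 + y ^ 2))) :
    Summable (fun n : ℕ => (numWalksXAxis n : ℝ) * t ^ n) ∧
    Summable (fun n : ℕ => (-1 : ℝ) ^ n * Y^[n] 1 * Y^[n + 1] 1) ∧
    (∑' n : ℕ, (numWalksXAxis n : ℝ) * t ^ n)
      = (1 / t) * ∑' n : ℕ, (-1 : ℝ) ^ n * Y^[n] 1 * Y^[n + 1] 1 := by
  exact stmt_5_general t ht (by nlinarith) Y hY
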